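/- Let G : P_1(ℝ) → ℝ be of class C^1 and let m ∈ P_1(ℝ) be compactly supported. Then ∫_0^1 G(t·m + (1−t)δ_0) dt − ∫_0^1 δG(t·m + (1−t)δ_0, 0) dt = G(m). -/

import Mathlib

open MeasureTheory Filter Topology

noncomputable section

/-- `π` is a coupling of the measures `m` and `μ` on `ℝ`. -/
def IsCoupling (π : Measure (ℝ × ℝ)) (m μ : Measure ℝ) : Prop :=
  π.map Prod.fst = m ∧ π.map Prod.snd = μ

/-- The Wasserstein distance of order one between two measures on `ℝ`:
the infimum over couplings `π` of `∫ |x - y| dπ(x,y)`. -/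
def W1 (m μ : Measure ℝ) : ℝ :=
  sInf {c : ℝ | ∃ π : Measure (ℝ × ℝ), IsCoupling π m μ ∧ c = ∫ p, |p.1 - p.2| ∂π}

/-- Membership in `P₁(ℝ)`: Borel probability measures on `ℝ` with finite first moment. -/
def MemP1 (m : Measure ℝ) : Prop :=
  IsProbabilityMeasure m ∧ Integrable (fun x => |x|) m

/-- Membership in `P([-K,K])`: probability measures supported in `[-K,K]`. -/
def MemPK (K : ℝ) (m : Measure ℝ) : Prop :=
  IsProbabilityMeasure m ∧ m (Set.Icc (-K) K)ᶜ = 0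

/-- The convex combination `(1-t)·m₀ + t·m` of two measures. -/
def lineSeg (m₀ m : Measure ℝ) (t : ℝ) : Measure ℝ :=
  ENNReal.ofReal (1 - t) • m₀ + ENNReal.ofReal t • m

/-- The integral of `f` against the signed difference `m - μ`:
`∫ f d(m - μ) = ∫ f dm - ∫ f dμ`. -/
def dInt (f : ℝ → ℝ) (m μ : Measure ℝ) : ℝ := (∫ x, f x ∂m) - ∫ x, f x ∂μ

/-- `W₁`-(sequential) compactness of a subset of `P₁(ℝ)`. -/
def W1Compact (𝒦 : Set (Measure ℝ)) : Prop :=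
  (∀ m ∈ 𝒦, MemP1 m) ∧
  ∀ u : ℕ → Measure ℝ, (∀ n, u n ∈ 𝒦) →
    ∃ m ∈ 𝒦, ∃ φ : ℕ → ℕ, StrictMono φ ∧
      Tendsto (fun n => W1 (u (φ n)) m) atTop (𝓝 0)

/-- Sublinearity in the real variable, uniformly over `W₁`-compact sets of measures. -/
def SublinearOnCompacts (G : Measure ℝ → ℝ → ℝ) : Prop :=
  ∀ 𝒦 : Set (Measure ℝ), W1Compact 𝒦 →
    ∃ C > 0, ∀ m ∈ 𝒦, ∀ x : ℝ, |G m x| ≤ C * (1 + |x|)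

/-- `W₁`-continuity of a function of the measure variable at a point of `P₁(ℝ)`. -/
def W1ContinuousAt (g : Measure ℝ → ℝ) (m : Measure ℝ) : Prop :=
  ∀ ε > 0, ∃ η > 0, ∀ μ, MemP1 μ → W1 μ m < η → |g μ - g m| < ε

/-- Joint continuity of `G : P₁(ℝ) × ℝ → ℝ`. -/
def JointlyContinuous (G : Measure ℝ → ℝ → ℝ) : Prop :=
  ∀ m x, MemP1 m → ∀ ε > 0, ∃ η > 0, ∀ μ y, MemP1 μ →
    W1 μ m < η → |y - x| < η → |G μ y - G m x| < ε

/-- Joint continuity of `G : P₁(ℝ) × ℝ × ℝ → ℝ`. -/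
def JointlyContinuous2 (G : Measure ℝ → ℝ → ℝ → ℝ) : Prop :=
  ∀ m x y, MemP1 m → ∀ ε > 0, ∃ η > 0, ∀ μ x' y', MemP1 μ →
    W1 μ m < η → |x' - x| < η → |y' - y| < η → |G μ x' y' - G m x y| < ε

/-- `H` is a version of the (linear functional) derivative of `F : P₁(ℝ) → ℝ`. -/
def IsDerivVersion (F : Measure ℝ → ℝ) (H : Measure ℝ → ℝ → ℝ) : Prop :=
  Measurable (Function.uncurry H) ∧
  SublinearOnCompacts H ∧
  ∀ m m₀, MemP1 m → MemP1 m₀ →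
    F m - F m₀ = ∫ t in (0:ℝ)..1, dInt (H (lineSeg m₀ m t)) m m₀

/-- `H` is the canonical derivative of `F : P₁(ℝ) → ℝ`: the version of the derivative
satisfying `∫ H(μ,x) dμ(x) = 0` for every `μ ∈ P₁(ℝ)`. -/
def IsCanonicalDeriv (F : Measure ℝ → ℝ) (H : Measure ℝ → ℝ → ℝ) : Prop :=
  IsDerivVersion F H ∧ ∀ μ, MemP1 μ → ∫ x, H μ x ∂μ = 0

/-- `G : P₁(ℝ) × ℝ → ℝ` is of class `C^{0,1}`. -/
def IsC01 (G : Measure ℝ → ℝ → ℝ) : Prop :=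
  (∀ m, MemP1 m → ContDiff ℝ 1 (G m)) ∧
  (∀ x : ℝ, ∀ m, MemP1 m → W1ContinuousAt (fun μ => G μ x) m) ∧
  SublinearOnCompacts G ∧
  JointlyContinuous (fun m x => deriv (G m) x)

/-- `F : P₁(ℝ) → ℝ` is of class `C¹` with canonical derivative `H`. -/
def IsC1 (F : Measure ℝ → ℝ) (H : Measure ℝ → ℝ → ℝ) : Prop :=
  IsCanonicalDeriv F H ∧ IsC01 H

/-- Joint continuity on `P([-K,K]) × [-K,K]`. -/
def JointlyContinuousOnK (K : ℝ) (G : Measure ℝ → ℝ → ℝ) : Prop :=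
  ∀ m x, MemPK K m → x ∈ Set.Icc (-K) K → ∀ ε > 0, ∃ η > 0,
    ∀ μ y, MemPK K μ → y ∈ Set.Icc (-K) K → W1 μ m < η → |y - x| < η →
      |G μ y - G m x| < ε

/-- Joint continuity on `P([-K,K]) × [-K,K]²`. -/
def JointlyContinuousOnK2 (K : ℝ) (G : Measure ℝ → ℝ → ℝ → ℝ) : Prop :=
  ∀ m x y, MemPK K m → x ∈ Set.Icc (-K) K → y ∈ Set.Icc (-K) K → ∀ ε > 0, ∃ η > 0,
    ∀ μ x' y', MemPK K μ → x' ∈ Set.Icc (-K) K → y' ∈ Set.Icc (-K) K →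
      W1 μ m < η → |x' - x| < η → |y' - y| < η → |G μ x' y' - G m x y| < ε

end

/-!
Along the segment `L t = (1 - t) m₀ + t m` put `h t = ∫ δG (L t) d(m - m₀)`. Since
`∫ δG (L t) d(L t) = 0` and `L t - m₀ = t (m - m₀)`, we have `t h t = -∫ δG (L t) dm₀`. The
derivative formula on the segments from `m₀` to `L t` says that `G ∘ L` is a primitive of `h`,
so `t G (L t)` is absolutely continuous with almost everywhere derivative
`G (L t) - ∫ δG (L t) dm₀`. Integrating over `[0, 1]` gives the identity for every base point
`m₀`, and `m₀ = δ₀` is the case of interest.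
-/

theorem integral_primitive_eq_sub {h : ℝ → ℝ} {a b : ℝ} (hh : IntervalIntegrable h volume a b) :
    ∫ t in a..b, ∫ s in a..t, h s = b * (∫ t in a..b, h t) - ∫ t in a..b, t * h t := by
  have hac : AbsolutelyContinuousOnInterval (fun t => ∫ s in a..t, h s) a b :=
    hh.absolutelyContinuousOnInterval_intervalIntegral Set.left_mem_uIcc
  have hid : AbsolutelyContinuousOnInterval (fun t : ℝ => t) a b :=
    LipschitzWith.id.lipschitzOnWith.absolutelyContinuousOnInterval
  have hparts : ∫ t in a..b, ((∫ s in a..t, h s) + t * h t) = b * ∫ t in a..b, h t := by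
    have hprod := hid.integral_deriv_mul_eq_sub hac
    simp only [deriv_id'', one_mul, intervalIntegral.integral_same, mul_zero, sub_zero] at hprod
    rw [← hprod]
    refine intervalIntegral.integral_congr_ae ?_
    filter_upwards [hh.ae_hasDerivAt_integral] with t hderiv ht
    rw [(hderiv (Set.uIoc_subset_uIcc ht) a Set.left_mem_uIcc).deriv]
  rw [intervalIntegral.integral_add hac.continuousOn.intervalIntegrable
    (hh.continuousOn_mul (continuousOn_id' _))] at hparts
  exact eq_sub_of_add_eq hparts

section Wasserstein

variable {m μ : Measure ℝ} {π : Measure (ℝ × ℝ)}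

theorem W1_nonneg (m μ : Measure ℝ) : 0 ≤ W1 m μ := by
  refine Real.sInf_nonneg ?_
  rintro c ⟨π, -, rfl⟩
  exact integral_nonneg fun _ => abs_nonneg _

theorem IsCoupling.swap (hπ : IsCoupling π m μ) : IsCoupling (π.map Prod.swap) μ m :=
  ⟨(Measure.map_map measurable_fst measurable_swap).trans hπ.2,
    (Measure.map_map measurable_snd measurable_swap).trans hπ.1⟩

theorem IsCoupling.W1_le (hπ : IsCoupling π m μ) : W1 m μ ≤ ∫ p, |p.1 - p.2| ∂π := by
  refine csInf_le ⟨0, ?_⟩ ⟨π, hπ, rfl⟩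
  rintro c ⟨π, -, rfl⟩
  exact integral_nonneg fun _ => abs_nonneg _

theorem W1_comm (m μ : Measure ℝ) : W1 m μ = W1 μ m := by
  suffices hsub : ∀ m μ : Measure ℝ,
      {c : ℝ | ∃ π, IsCoupling π m μ ∧ c = ∫ p, |p.1 - p.2| ∂π} ⊆
        {c : ℝ | ∃ π, IsCoupling π μ m ∧ c = ∫ p, |p.1 - p.2| ∂π} from
    congrArg sInf ((hsub m μ).antisymm (hsub μ m))
  rintro m μ c ⟨π, hπ, rfl⟩
  refine ⟨π.map Prod.swap, hπ.swap, ?_⟩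
  rw [integral_map measurable_swap.aemeasurable (by fun_prop)]
  simp only [Prod.fst_swap, Prod.snd_swap, abs_sub_comm]

theorem isCoupling_prod (m μ : Measure ℝ) [IsProbabilityMeasure m] [IsProbabilityMeasure μ] :
    IsCoupling (m.prod μ) m μ :=
  ⟨measurePreserving_fst.map_eq, measurePreserving_snd.map_eq⟩

theorem IsCoupling.integrable_abs_sub (hπ : IsCoupling π m μ) (hm : Integrable (fun x => |x|) m)
    (hμ : Integrable (fun x => |x|) μ) : Integrable (fun p => |p.1 - p.2|) π := by
  rw [← hπ.1, integrable_map_measure (by fun_prop) (by fun_prop)] at hm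
  rw [← hπ.2, integrable_map_measure (by fun_prop) (by fun_prop)] at hμ
  exact (hm.add hμ).mono' (by fun_prop) (Eventually.of_forall fun p => by
    simpa using abs_sub p.1 p.2)

-- The common part `ν` is left in place: couple it with itself along the diagonal, at no cost.
theorem W1_add_smul_le (hπ : IsCoupling π m μ) (hcost : Integrable (fun p => |p.1 - p.2|) π)
    (ν : Measure ℝ) {a : ℝ} (ha : 0 ≤ a) :
    W1 (ν + ENNReal.ofReal a • m) (ν + ENNReal.ofReal a • μ) ≤ a * ∫ p, |p.1 - p.2| ∂π := by
  have hdiag : Measurable fun x : ℝ => (x, x) := by fun_prop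
  have hcoupling : IsCoupling (ν.map (fun x => (x, x)) + ENNReal.ofReal a • π)
      (ν + ENNReal.ofReal a • m) (ν + ENNReal.ofReal a • μ) := by
    constructor
    · rw [Measure.map_add _ _ measurable_fst, Measure.map_smul, hπ.1,
        Measure.map_map measurable_fst hdiag]
      exact congrArg (· + _) Measure.map_id
    · rw [Measure.map_add _ _ measurable_snd, Measure.map_smul, hπ.2,
        Measure.map_map measurable_snd hdiag]
      exact congrArg (· + _) Measure.map_id
  have hdiag_int : Integrable (fun p : ℝ × ℝ => |p.1 - p.2|) (ν.map fun x => (x, x)) := by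
    rw [integrable_map_measure (by fun_prop) hdiag.aemeasurable]
    simp only [Function.comp_def, sub_self, abs_zero]
    exact integrable_zero _ _ ν
  refine hcoupling.W1_le.trans_eq ?_
  rw [integral_add_measure hdiag_int (hcost.smul_measure ENNReal.ofReal_ne_top),
    integral_map hdiag.aemeasurable (by fun_prop), integral_smul_measure,
    ENNReal.toReal_ofReal ha]
  simp only [sub_self, abs_zero, integral_zero, zero_add, smul_eq_mul]

end Wasserstein

section Segment

variable {m₀ m : Measure ℝ}

theorem lineSeg_one (m₀ m : Measure ℝ) : lineSeg m₀ m 1 = m := by simp [lineSeg]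

theorem lineSeg_lineSeg (m₀ m : Measure ℝ) {s t : ℝ} (hs : s ∈ Set.Icc (0 : ℝ) 1)
    (ht : t ∈ Set.Icc (0 : ℝ) 1) : lineSeg m₀ (lineSeg m₀ m t) s = lineSeg m₀ m (s * t) := by
  unfold lineSeg
  rw [smul_add, smul_smul, smul_smul, ← ENNReal.ofReal_mul hs.1, ← ENNReal.ofReal_mul hs.1,
    ← add_assoc, ← add_smul, ← ENNReal.ofReal_add (sub_nonneg.2 hs.2)
      (mul_nonneg hs.1 (sub_nonneg.2 ht.2))]
  congr 3
  ring

theorem measurable_lineSeg (m₀ m : Measure ℝ) : Measurable (lineSeg m₀ m) := by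
  refine Measure.measurable_of_measurable_coe _ fun s _ => ?_
  simp only [lineSeg, Measure.coe_add, Measure.coe_smul, Pi.add_apply, Pi.smul_apply, smul_eq_mul]
  fun_prop

theorem memP1_dirac (x : ℝ) : MemP1 (Measure.dirac x) :=
  ⟨inferInstance, integrable_dirac (by simp)⟩

theorem MemP1.lineSeg (hm₀ : MemP1 m₀) (hm : MemP1 m) {t : ℝ} (ht : t ∈ Set.Icc (0 : ℝ) 1) :
    MemP1 (lineSeg m₀ m t) := by
  have := hm₀.1
  have := hm.1
  refine ⟨⟨?_⟩, (hm₀.2.smul_measure ENNReal.ofReal_ne_top).add_measure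
    (hm.2.smul_measure ENNReal.ofReal_ne_top)⟩
  simp only [_root_.lineSeg, Measure.coe_add, Measure.coe_smul, Pi.add_apply, Pi.smul_apply,
    measure_univ, smul_eq_mul, mul_one]
  rw [← ENNReal.ofReal_add (sub_nonneg.2 ht.2) ht.1, sub_add_cancel, ENNReal.ofReal_one]

theorem dInt_lineSeg {f : ℝ → ℝ} (hf₀ : Integrable f m₀) (hf : Integrable f m) {t : ℝ}
    (ht : t ∈ Set.Icc (0 : ℝ) 1) : dInt f (lineSeg m₀ m t) m₀ = t * dInt f m m₀ := by
  unfold dInt lineSeg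
  rw [integral_add_measure (hf₀.smul_measure ENNReal.ofReal_ne_top)
    (hf.smul_measure ENNReal.ofReal_ne_top), integral_smul_measure, integral_smul_measure,
    ENNReal.toReal_ofReal (sub_nonneg.2 ht.2), ENNReal.toReal_ofReal ht.1, smul_eq_mul, smul_eq_mul]
  ring

theorem W1_lineSeg_le_of_le {π : Measure (ℝ × ℝ)} (hπ : IsCoupling π m m₀)
    (hcost : Integrable (fun p => |p.1 - p.2|) π) {s t : ℝ} (hs : 0 ≤ s) (hst : s ≤ t)
    (ht : t ≤ 1) :
    W1 (lineSeg m₀ m t) (lineSeg m₀ m s) ≤ (t - s) * ∫ p, |p.1 - p.2| ∂π := by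
  set common := ENNReal.ofReal (1 - t) • m₀ + ENNReal.ofReal s • m
  have hts : 0 ≤ t - s := sub_nonneg.2 hst
  have eq_t : lineSeg m₀ m t = common + ENNReal.ofReal (t - s) • m := by
    rw [add_assoc, ← add_smul, ← ENNReal.ofReal_add hs hts, add_sub_cancel, lineSeg]
  have eq_s : lineSeg m₀ m s = common + ENNReal.ofReal (t - s) • m₀ := by
    rw [add_right_comm, ← add_smul, ← ENNReal.ofReal_add (sub_nonneg.2 ht) hts,
      sub_add_sub_cancel, lineSeg]
  rw [eq_t, eq_s]
  exact W1_add_smul_le hπ hcost common hts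

theorem W1_lineSeg_le {π : Measure (ℝ × ℝ)} (hπ : IsCoupling π m m₀)
    (hcost : Integrable (fun p => |p.1 - p.2|) π) {s t : ℝ} (hs : s ∈ Set.Icc (0 : ℝ) 1)
    (ht : t ∈ Set.Icc (0 : ℝ) 1) :
    W1 (lineSeg m₀ m t) (lineSeg m₀ m s) ≤ |t - s| * ∫ p, |p.1 - p.2| ∂π := by
  rcases le_total s t with hst | hts
  · rw [abs_of_nonneg (sub_nonneg.2 hst)]
    exact W1_lineSeg_le_of_le hπ hcost hs.1 hst ht.2
  · rw [abs_sub_comm, abs_of_nonneg (sub_nonneg.2 hts), W1_comm]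
    exact W1_lineSeg_le_of_le hπ hcost ht.1 hts hs.2

theorem w1Compact_image_lineSeg (hm₀ : MemP1 m₀) (hm : MemP1 m) :
    W1Compact (lineSeg m₀ m '' Set.Icc 0 1) := by
  have := hm₀.1
  have := hm.1
  refine ⟨?_, fun u hu => ?_⟩
  · rintro _ ⟨t, ht, rfl⟩
    exact hm₀.lineSeg hm ht
  choose τ hτ hτu using hu
  obtain ⟨a, ha, φ, hφ, hlim⟩ := isCompact_Icc.tendsto_subseq hτ
  refine ⟨_, ⟨a, ha, rfl⟩, φ, hφ, ?_⟩
  set c := ∫ p, |p.1 - p.2| ∂(m.prod m₀)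
  have hbound : ∀ n, W1 (u (φ n)) (lineSeg m₀ m a) ≤ |τ (φ n) - a| * c := fun n => by
    have hπ := isCoupling_prod m m₀
    rw [← hτu]
    exact W1_lineSeg_le hπ (hπ.integrable_abs_sub hm.2 hm₀.2) ha (hτ _)
  have hzero : Tendsto (fun n => |τ (φ n) - a| * c) atTop (𝓝 0) := by
    simpa using ((hlim.sub_const a).abs).mul_const c
  exact squeeze_zero (fun n => W1_nonneg _ _) hbound hzero

end Segment

section Derivative

variable {F : Measure ℝ → ℝ} {H : Measure ℝ → ℝ → ℝ} {m₀ m ν : Measure ℝ}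

theorem MemP1.integrable_mul_one_add_abs (hν : MemP1 ν) (C : ℝ) :
    Integrable (fun x => C * (1 + |x|)) ν :=
  have := hν.1
  ((integrable_const 1).add hν.2).const_mul C

theorem IsDerivVersion.integrable_lineSeg (hH : IsDerivVersion F H) (hm₀ : MemP1 m₀)
    (hm : MemP1 m) (hν : MemP1 ν) {t : ℝ} (ht : t ∈ Set.Icc (0 : ℝ) 1) :
    Integrable (H (lineSeg m₀ m t)) ν := by
  obtain ⟨C, -, hC⟩ := hH.2.1 _ (w1Compact_image_lineSeg hm₀ hm)
  exact (hν.integrable_mul_one_add_abs C).mono' hH.1.of_uncurry_left.aestronglyMeasurable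
    (Eventually.of_forall (hC _ ⟨t, ht, rfl⟩))

theorem IsDerivVersion.intervalIntegrable_integral_lineSeg (hH : IsDerivVersion F H)
    (hm₀ : MemP1 m₀) (hm : MemP1 m) (hν : MemP1 ν) :
    IntervalIntegrable (fun t => ∫ x, H (lineSeg m₀ m t) x ∂ν) volume 0 1 := by
  have := hν.1
  obtain ⟨C, -, hC⟩ := hH.2.1 _ (w1Compact_image_lineSeg hm₀ hm)
  have hmeas : StronglyMeasurable fun t => ∫ x, H (lineSeg m₀ m t) x ∂ν :=
    (hH.1.comp (((measurable_lineSeg m₀ m).comp measurable_fst).prodMk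
      measurable_snd)).stronglyMeasurable.integral_prod_right'
  rw [intervalIntegrable_iff_integrableOn_Ioc_of_le zero_le_one]
  refine Integrable.of_bound hmeas.aestronglyMeasurable (∫ x, C * (1 + |x|) ∂ν) ?_
  filter_upwards [ae_restrict_mem measurableSet_Ioc] with t ht
  exact norm_integral_le_of_norm_le (hν.integrable_mul_one_add_abs C)
    (Eventually.of_forall (hC _ ⟨t, Set.Ioc_subset_Icc_self ht, rfl⟩))

theorem IsDerivVersion.intervalIntegrable_dInt_lineSeg (hH : IsDerivVersion F H)
    (hm₀ : MemP1 m₀) (hm : MemP1 m) :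
    IntervalIntegrable (fun t => dInt (H (lineSeg m₀ m t)) m m₀) volume 0 1 :=
  (hH.intervalIntegrable_integral_lineSeg hm₀ hm hm).sub
    (hH.intervalIntegrable_integral_lineSeg hm₀ hm hm₀)

theorem IsDerivVersion.apply_lineSeg (hH : IsDerivVersion F H) (hm₀ : MemP1 m₀) (hm : MemP1 m)
    {t : ℝ} (ht : t ∈ Set.Icc (0 : ℝ) 1) :
    F (lineSeg m₀ m t) = F m₀ + ∫ s in (0 : ℝ)..t, dInt (H (lineSeg m₀ m s)) m m₀ := by
  have hrescale : ∀ s ∈ Set.Icc (0 : ℝ) 1,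
      dInt (H (lineSeg m₀ (lineSeg m₀ m t) s)) (lineSeg m₀ m t) m₀ =
        t * dInt (H (lineSeg m₀ m (s * t))) m m₀ := fun s hs => by
    have hst : s * t ∈ Set.Icc (0 : ℝ) 1 :=
      ⟨mul_nonneg hs.1 ht.1, mul_le_one₀ hs.2 ht.1 ht.2⟩
    rw [lineSeg_lineSeg m₀ m hs ht, dInt_lineSeg (hH.integrable_lineSeg hm₀ hm hm₀ hst)
      (hH.integrable_lineSeg hm₀ hm hm hst) ht]
  rw [← sub_eq_iff_eq_add']
  calc F (lineSeg m₀ m t) - F m₀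
      = ∫ s in (0 : ℝ)..1, dInt (H (lineSeg m₀ (lineSeg m₀ m t) s)) (lineSeg m₀ m t) m₀ :=
        hH.2.2 _ _ (hm₀.lineSeg hm ht) hm₀
    _ = ∫ s in (0 : ℝ)..1, t * dInt (H (lineSeg m₀ m (s * t))) m m₀ :=
        intervalIntegral.integral_congr (by rwa [Set.uIcc_of_le zero_le_one])
    _ = ∫ s in (0 : ℝ)..t, dInt (H (lineSeg m₀ m s)) m m₀ := by
        rw [intervalIntegral.integral_const_mul,
          intervalIntegral.mul_integral_comp_mul_right
            (f := fun s => dInt (H (lineSeg m₀ m s)) m m₀),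
          zero_mul, one_mul]

theorem IsDerivVersion.integral_apply_lineSeg (hH : IsDerivVersion F H) (hm₀ : MemP1 m₀)
    (hm : MemP1 m) :
    ∫ t in (0 : ℝ)..1, F (lineSeg m₀ m t) =
      F m - ∫ t in (0 : ℝ)..1, t * dInt (H (lineSeg m₀ m t)) m m₀ := by
  set h : ℝ → ℝ := fun t => dInt (H (lineSeg m₀ m t)) m m₀
  have hh : IntervalIntegrable h volume 0 1 := hH.intervalIntegrable_dInt_lineSeg hm₀ hm
  have hend : F m = F m₀ + ∫ t in (0 : ℝ)..1, h t := by
    simpa only [lineSeg_one] using hH.apply_lineSeg hm₀ hm (Set.right_mem_Icc.2 zero_le_one)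
  have hprim : IntervalIntegrable (fun t => ∫ s in (0 : ℝ)..t, h s) volume 0 1 :=
    (intervalIntegral.continuousOn_primitive_interval' hh Set.left_mem_uIcc).intervalIntegrable
  calc ∫ t in (0 : ℝ)..1, F (lineSeg m₀ m t)
      = ∫ t in (0 : ℝ)..1, (F m₀ + ∫ s in (0 : ℝ)..t, h s) :=
        intervalIntegral.integral_congr fun t ht =>
          hH.apply_lineSeg hm₀ hm (by rwa [Set.uIcc_of_le zero_le_one] at ht)
    _ = F m₀ + ∫ t in (0 : ℝ)..1, ∫ s in (0 : ℝ)..t, h s := by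
        rw [intervalIntegral.integral_add intervalIntegrable_const hprim,
          intervalIntegral.integral_const, sub_zero, one_smul]
    _ = F m - ∫ t in (0 : ℝ)..1, t * h t := by
        rw [integral_primitive_eq_sub hh, one_mul, hend, add_sub_assoc]

theorem IsCanonicalDeriv.mul_dInt_lineSeg (hH : IsCanonicalDeriv F H) (hm₀ : MemP1 m₀)
    (hm : MemP1 m) {t : ℝ} (ht : t ∈ Set.Icc (0 : ℝ) 1) :
    t * dInt (H (lineSeg m₀ m t)) m m₀ = -∫ x, H (lineSeg m₀ m t) x ∂m₀ := by
  rw [← dInt_lineSeg (hH.1.integrable_lineSeg hm₀ hm hm₀ ht)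
    (hH.1.integrable_lineSeg hm₀ hm hm ht) ht, dInt, hH.2 _ (hm₀.lineSeg hm ht), zero_sub]

end Derivative

theorem stmt18_general {G : Measure ℝ → ℝ} {δG : Measure ℝ → ℝ → ℝ} (hG : IsCanonicalDeriv G δG)
    {m₀ m : Measure ℝ} (hm₀ : MemP1 m₀) (hm : MemP1 m) :
    (∫ t in (0 : ℝ)..1, G (lineSeg m₀ m t)) -
      (∫ t in (0 : ℝ)..1, ∫ x, δG (lineSeg m₀ m t) x ∂m₀) = G m := by
  have hcanonical : ∫ t in (0 : ℝ)..1, t * dInt (δG (lineSeg m₀ m t)) m m₀ =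
      -∫ t in (0 : ℝ)..1, ∫ x, δG (lineSeg m₀ m t) x ∂m₀ := by
    rw [← intervalIntegral.integral_neg]
    refine intervalIntegral.integral_congr fun t ht => hG.mul_dInt_lineSeg hm₀ hm ?_
    rwa [Set.uIcc_of_le zero_le_one] at ht
  rw [hG.1.integral_apply_lineSeg hm₀ hm, hcanonical, sub_neg_eq_add, add_sub_cancel_right]

/-- key identity in the proof of the fundamental theorem: for
`G : P₁(ℝ) → ℝ` of class `C¹` and `m ∈ P₁(ℝ)` compactly supported,
`∫₀¹ G(t·m + (1-t)δ₀) dt - ∫₀¹ δG(t·m + (1-t)δ₀, 0) dt = G(m)`. -/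
theorem stmt18 (G : Measure ℝ → ℝ) (δG : Measure ℝ → ℝ → ℝ) (hG : IsC1 G δG)
    (m : Measure ℝ) (hm : MemP1 m) (K : ℝ) (hK : 0 < K) (hsupp : MemPK K m) :
    (∫ t in (0:ℝ)..1, G (lineSeg (Measure.dirac 0) m t)) -
      (∫ t in (0:ℝ)..1, δG (lineSeg (Measure.dirac 0) m t) 0) = G m := by
  simpa only [integral_dirac] using stmt18_general hG.1 (memP1_dirac 0) hm
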